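/- arXiv:2411.19208 — 2 statements merged into one kernel-verified Lean document; each statement's English description precedes it below -/
import Mathlib

section
/- Let $n, \tilde{n}, r, \tilde{r}, d, p$ be natural numbers with $r, \tilde{r} \ge 1$, $n - r = \tilde{n} - \tilde{r} = d$ and $p \le \min\{r, \tilde{r}\}$. Then there exists a bijection $\Phi$ between $\mathcal{S}_{\le p}(n,r)$ and $\mathcal{S}_{\le p}(\tilde{n},\tilde{r})$ such that for all $\sigma, \sigma' \in \mathcal{S}_{\le p}(n,r)$ one has $\sigma \preceq \sigma'$ if and only if $\Phi(\sigma) \preceq \Phi(\sigma')$. -/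
/-! Common definitions: signotopes and co-signotopes on `[n] = {1, …, n}` (encoded as
`Finset.Icc 1 n` in `ℕ`), sign functions are `Finset ℕ → Bool` (`true` = `+`, `false` = `-`)
that vanish (are `-`) away from the relevant subsets. -/

open Classical in
/-- The sign function with `+`-set `S` (and `-` elsewhere). -/
noncomputable def ofPlusSet (S : Set (Finset ℕ)) : Finset ℕ → Bool :=
  fun A => if A ∈ S then true else false

/-- Number of sign changes in a list of signs. -/
def signChanges (l : List Bool) : ℕ :=
  ((l.zip l.tail).filter fun p => p.1 ≠ p.2).length

/-- Number of `+`-subsets of a sign function. -/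
noncomputable def plusCount (τ : Finset ℕ → Bool) : ℕ :=
  {A : Finset ℕ | τ A = true}.ncard

/-- The series of signs `τ (C ∪ {x})` for `x ∈ [n] \ C` in increasing order.
For a `d`-subset `B` with `i`-th smallest element `b`, `series n τ (B.erase b)` is
the `(τ,B,i)`-series. -/
def series (n : ℕ) (τ : Finset ℕ → Bool) (C : Finset ℕ) : List Bool :=
  ((Finset.Icc 1 n \ C).sort (· ≤ ·)).map fun x => τ (insert x C)

/-- An `r`-signotope on `[n]`, encoded as a sign function on all of `Finset ℕ`
which is `-` away from the `r`-subsets of `[n]`. -/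
def IsSignotope (n r : ℕ) (σ : Finset ℕ → Bool) : Prop :=
  (∀ A, σ A = true → A ⊆ Finset.Icc 1 n ∧ A.card = r) ∧
  ∀ X : Finset ℕ, X ⊆ Finset.Icc 1 n → X.card = r + 1 →
    signChanges ((X.sort (· ≤ ·)).map fun x => σ (X.erase x)) ≤ 1

/-- A `d`-co-signotope on `[n]`: every `(τ,B,i)`-series has at most one sign change. -/
def IsCoSignotope (n d : ℕ) (τ : Finset ℕ → Bool) : Prop :=
  (∀ A, τ A = true → A ⊆ Finset.Icc 1 n ∧ A.card = d) ∧
  ∀ B : Finset ℕ, B ⊆ Finset.Icc 1 n → B.card = d → ∀ b ∈ B,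
    signChanges (series n τ (B.erase b)) ≤ 1

/-- `𝒮_p(n,r)`: `r`-signotopes on `[n]` with exactly `p` `+`-signs. -/
noncomputable def sigSet (n r p : ℕ) : Set (Finset ℕ → Bool) :=
  {σ | IsSignotope n r σ ∧ plusCount σ = p}

/-- `𝒮_{≤p}(n,r)`. -/
noncomputable def sigSetLe (n r p : ℕ) : Set (Finset ℕ → Bool) :=
  {σ | IsSignotope n r σ ∧ plusCount σ ≤ p}

/-- `𝒮̄_p(n,d)`: `d`-co-signotopes on `[n]` with exactly `p` `+`-subsets. -/
noncomputable def coSigSet (n d p : ℕ) : Set (Finset ℕ → Bool) :=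
  {τ | IsCoSignotope n d τ ∧ plusCount τ = p}

/-- `𝒮̄_{≤p}(n,d)`. -/
noncomputable def coSigSetLe (n d p : ℕ) : Set (Finset ℕ → Bool) :=
  {τ | IsCoSignotope n d τ ∧ plusCount τ ≤ p}

/-- `σ` and `τ` differ by a single step: `σ⁻¹(+) ⊊ τ⁻¹(+)` and `|τ⁻¹(+)| = |σ⁻¹(+)| + 1`. -/
noncomputable def SingleStep (σ τ : Finset ℕ → Bool) : Prop :=
  {A | σ A = true} ⊂ {A | τ A = true} ∧ plusCount τ = plusCount σ + 1

/-- The higher Bruhat order on `r`-signotopes on `[n]`: reflexive-transitive closure of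
the single step relation. -/
noncomputable def BruhatLe (n r : ℕ) (σ τ : Finset ℕ → Bool) : Prop :=
  Relation.ReflTransGen (fun a b => IsSignotope n r a ∧ IsSignotope n r b ∧ SingleStep a b) σ τ

/-- The complementary higher Bruhat order on `d`-co-signotopes on `[n]`. -/
noncomputable def CoBruhatLe (n d : ℕ) (σ τ : Finset ℕ → Bool) : Prop :=
  Relation.ReflTransGen (fun a b => IsCoSignotope n d a ∧ IsCoSignotope n d b ∧ SingleStep a b) σ τ

/-- Adjacency in the graph `G_{n,d}`: `B' = (B \ {x}) ∪ {y}` with no element of `B \ {x}`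
strictly between `x` and `y`. -/
def GAdj (n d : ℕ) (B B' : Finset ℕ) : Prop :=
  B ⊆ Finset.Icc 1 n ∧ B.card = d ∧ B' ⊆ Finset.Icc 1 n ∧ B'.card = d ∧
  ∃ x ∈ B, ∃ y ∈ Finset.Icc 1 n, y ∉ B ∧ B' = insert y (B.erase x) ∧
    ∀ z ∈ B.erase x, ¬(min x y < z ∧ z < max x y)

/-- The source subset `S_{n,d,i} = {1,…,i} ∪ {n-d+i+1,…,n}`. -/
def sourceSubset (n d i : ℕ) : Finset ℕ :=
  Finset.Icc 1 i ∪ Finset.Icc (n - d + i + 1) n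

/-- Connectivity inside the `+`-subsets of `τ` (the induced subgraph `G_{n,d}[τ]`). -/
def plusConn (n d : ℕ) (τ : Finset ℕ → Bool) : Finset ℕ → Finset ℕ → Prop :=
  Relation.ReflTransGen fun A A' => τ A = true ∧ τ A' = true ∧ GAdj n d A A'

/-- The vertex set `𝒞^τ_i` of the `+`-component of `τ` containing `S_{n,d,i}`
(empty if `S_{n,d,i}` is not a `+`-subset). -/
def comp (n d : ℕ) (τ : Finset ℕ → Bool) (i : ℕ) : Set (Finset ℕ) :=
  {B | τ (sourceSubset n d i) = true ∧ τ B = true ∧ plusConn n d τ (sourceSubset n d i) B}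

/-- The `j`-th smallest element (1-based) of a finite set of naturals. -/
def nthElt (B : Finset ℕ) (j : ℕ) : ℕ := (B.sort (· ≤ ·)).getD (j - 1) 0

/-- `b_j` with the conventions `b_0 = 0` and `b_{d+1} = n+1` (as an integer). -/
def extNth (n d : ℕ) (B : Finset ℕ) (j : ℕ) : ℤ :=
  if j = 0 then 0 else if j ≤ d then (nthElt B j : ℤ) else (n : ℤ) + 1

/-- A series is left-aligned if it starts with `+` and ends with `-`. -/
def LeftAligned (l : List Bool) : Prop :=
  l.head? = some true ∧ l.getLast? = some false

/-- A series is right-aligned if it starts with `-` and ends with `+`. -/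
def RightAligned (l : List Bool) : Prop :=
  l.head? = some false ∧ l.getLast? = some true

/-- `𝒮̄_{p,i}(n,d)`: co-signotopes in `𝒮̄_p(n,d)` whose only nonempty `+`-component
is `𝒞^τ_i` (i.e. every `+`-subset lies in `𝒞^τ_i`). -/
noncomputable def coSigOnly (n d p i : ℕ) : Set (Finset ℕ → Bool) :=
  {τ | IsCoSignotope n d τ ∧ plusCount τ = p ∧ ∀ B, τ B = true → B ∈ comp n d τ i}

/-- `Z(d,i)`: points `(a_1,…,a_d) ∈ ℤ_{>0}^d` (0-indexed in Lean) with `a_j ≥ a_{j-1}`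
for `j ∈ [2,i]` and `a_j ≥ a_{j+1}` for `j ∈ [i+1,d-1]` (1-based indices). -/
def ZSet (d i : ℕ) : Set (Fin d → ℤ) :=
  {a | (∀ j, 0 < a j) ∧
    (∀ j k : Fin d, (j : ℕ) + 1 = (k : ℕ) → (k : ℕ) + 1 ≤ i → a j ≤ a k) ∧
    (∀ j k : Fin d, (j : ℕ) + 1 = (k : ℕ) → i ≤ (j : ℕ) → a k ≤ a j)}

/-- A `(d,i)`-Ferrers diagram with respect to `p`. -/
def IsFerrers (d i p : ℕ) (F : Set (Fin d → ℤ)) : Prop :=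
  F ⊆ ZSet d i ∧ F.ncard = p ∧
  ∀ a ∈ F, ∀ a' ∈ ZSet d i, (∀ j, a' j ≤ a j) → a' ∈ F

/-- The number of `(d,i)`-Ferrers diagrams with respect to `p`. -/
noncomputable def ferrersCount (d i p : ℕ) : ℕ :=
  {F : Set (Fin d → ℤ) | IsFerrers d i p F}.ncard

/-- `f_{n,d,i,j}` (here `j` is the 1-based coordinate index). -/
def fFun (n d i j : ℕ) (x : ℕ) : ℤ :=
  if j ≤ i then (x : ℤ) - j + 1 else ((n : ℤ) - x) - ((d : ℤ) - j) + 1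

/-- `g_{n,d,i}` maps a `d`-subset `B = (b_1 < … < b_d)` to
`(f_{n,d,i,1}(b_1), …, f_{n,d,i,d}(b_d))`. -/
def gMap (n d i : ℕ) (B : Finset ℕ) : Fin d → ℤ :=
  fun k => fFun n d i ((k : ℕ) + 1) (nthElt B ((k : ℕ) + 1))

/-- A sparse composition of `p` of length `d+1`. -/
def IsSparseComposition (d p : ℕ) (c : Fin (d + 1) → ℕ) : Prop :=
  (∑ i, c i) = p ∧
  ∀ i : Fin (d + 1), 1 ≤ (i : ℕ) →
    c i = 0 ∨ c ⟨(i : ℕ) - 1, lt_of_le_of_lt (Nat.sub_le _ _) i.isLt⟩ = 0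

/-- The component `τ_i` of the `+`-component decomposition `Δ(τ)`:
the sign function whose `+`-set is `𝒞^τ_i`. -/
noncomputable def compFun (n d : ℕ) (τ : Finset ℕ → Bool) (i : ℕ) : Finset ℕ → Bool :=
  ofPlusSet (comp n d τ i)

/-- Keep the `i` smallest elements of `B` and shift the others by `ñ - n`
(this is `g⁻¹_{ñ,d,i} ∘ g_{n,d,i}` on `d`-subsets). -/
def gammaSet (n tn i : ℕ) (B : Finset ℕ) : Finset ℕ :=
  ((B.sort (· ≤ ·)).mapIdx fun k x => if k < i then x else x + tn - n).toFinset

/-- The map `h_{n,ñ,d,p,i}` on sign functions. -/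
noncomputable def hFun (n tn i : ℕ) (τ : Finset ℕ → Bool) : Finset ℕ → Bool :=
  ofPlusSet {A | ∃ B, τ B = true ∧ A = gammaSet n tn i B}

open Classical in
/-- `γ_{τ,ñ}(B)`: replace `b_j` by `b_j + ñ - n` whenever the `(τ,B,j)`-series is
right-aligned. -/
noncomputable def gammaFun (n tn : ℕ) (τ : Finset ℕ → Bool) (B : Finset ℕ) : Finset ℕ :=
  B.image fun x => if RightAligned (series n τ (B.erase x)) then x + tn - n else x

/-- The simple bijection `φ_{n,ñ,d,p}` on sign functions. -/
noncomputable def phiFun (n tn : ℕ) (τ : Finset ℕ → Bool) : Finset ℕ → Bool :=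
  ofPlusSet {A | ∃ B, τ B = true ∧ A = gammaFun n tn τ B}

theorem signChanges_cons_cons (a b : Bool) (t : List Bool) :
    signChanges (a :: b :: t) = (if a ≠ b then 1 else 0) + signChanges (b :: t) := by
  by_cases h : a = b <;> simp [signChanges, h]
  omega

theorem signChanges_zero_iff (a : Bool) (l : List Bool) :
    signChanges (a :: l) = 0 ↔ ∀ b ∈ l, b = a := by
  induction l generalizing a with
  | nil => simp [signChanges]
  | cons e t ih =>
    rw [signChanges_cons_cons]
    by_cases h : a = e
    · subst h; simp [ih]
    · simp [h]
      intro h'; exact absurd h'.symm h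

theorem signChanges_le_one_iff (l : List Bool) :
    signChanges l ≤ 1 ↔ ∀ a b : Bool, a ≠ b → ¬ [a, b, a].Sublist l := by
  induction l with
  | nil => simp [signChanges]
  | cons c l ih =>
    cases l with
    | nil =>
      simp [signChanges]
    | cons e t =>
      rw [signChanges_cons_cons]
      by_cases h : c = e
      · subst h
        simp only [ne_eq, not_true_eq_false, if_false, zero_add]
        rw [ih]
        constructor
        · intro H a b hab hs
          apply H a b hab
          rcases List.sublist_cons_iff.1 hs with h1 | ⟨r, h1, h2⟩
          · exact h1
          · simp only [List.cons.injEq] at h1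
            obtain ⟨rfl, rfl⟩ := h1
            rcases List.sublist_cons_iff.1 h2 with h3 | ⟨r, h3, h4⟩
            · exact h3.cons_cons _
            · simp only [List.cons.injEq] at h3
              exact absurd h3.1.symm hab
        · intro H a b hab hs
          exact H a b hab (hs.cons _)
      · have e1 : (if c ≠ e then 1 else 0) + signChanges (e :: t) ≤ 1 ↔ signChanges (e :: t) = 0 := by
          simp [h]
        rw [e1, signChanges_zero_iff]
        constructor
        · intro H a b hab hs
          have H' : ∀ x ∈ e :: t, x = e := by
            intro x hx
            rcases List.mem_cons.1 hx with h | h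
            · exact h
            · exact H x h
          have h2 : [b, a].Sublist (e :: t) := by
            have := hs.tail
            simpa using this
          have := H' b (h2.subset (by simp))
          have := H' a (h2.subset (by simp))
          simp_all
        · intro H b hb
          by_contra hne
          have hbc : b = c := by
            cases b <;> cases c <;> cases e <;> simp_all
          subst hbc
          apply H b e h
          exact List.Sublist.cons_cons _ (List.Sublist.cons_cons _ (List.singleton_sublist.2 hb))

theorem sublist_sort_iff (X : Finset ℕ) (x y z : ℕ) :
    [x, y, z].Sublist (X.sort (· ≤ ·)) ↔ x ∈ X ∧ y ∈ X ∧ z ∈ X ∧ x < y ∧ y < z := by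
  constructor
  · intro h
    have hs := (Finset.sortedLT_sort X).pairwise.sublist h
    have hm : ∀ w ∈ [x, y, z], w ∈ X := fun w hw => (Finset.mem_sort _).1 (h.subset hw)
    simp at hs hm
    tauto
  · rintro ⟨hx, hy, hz, h1, h2⟩
    have h3 : x < z := h1.trans h2
    apply List.sublist_of_subperm_of_pairwise (r := (· ≤ ·))
    · apply List.subperm_of_subset
      · simp; omega
      · intro w hw
        simp at hw
        rcases hw with rfl | rfl | rfl <;> simpa
    · simp; omega
    · exact Finset.pairwise_sort X _

theorem signChanges_sort_iff (X : Finset ℕ) (f : ℕ → Bool) :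
    signChanges ((X.sort (· ≤ ·)).map f) ≤ 1 ↔
      ∀ x ∈ X, ∀ y ∈ X, ∀ z ∈ X, x < y → y < z → f x = f z → f y = f x := by
  rw [signChanges_le_one_iff]
  constructor
  · intro H x hx y hy z hz h1 h2 h3
    by_contra hne
    apply H (f x) (f y) (fun h => hne h.symm)
    have := ((sublist_sort_iff X x y z).2 ⟨hx, hy, hz, h1, h2⟩).map f
    simpa [← h3] using this
  · intro H a b hab hs
    obtain ⟨l', hl', he⟩ := List.sublist_map_iff.1 hs
    match l', he with
    | [x, y, z], he =>
      simp only [List.map_cons, List.map_nil, List.cons.injEq, and_true] at he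
      obtain ⟨h1, h2, h3, h4, h5⟩ := (sublist_sort_iff X x y z).1 hl'
      have := H x h1 y h2 z h3 h4 h5 (by rw [← he.1, ← he.2.2])
      apply hab
      rw [he.1, he.2.1, this]
    | _ :: _ :: _ :: _ :: _, he => simp at he

/-- Families of `d`-subsets of `[n]` that are co-signotopes. -/
def FinCo (n d p : ℕ) (T : Finset (Finset ℕ)) : Prop :=
  (∀ B ∈ T, B ⊆ Finset.Icc 1 n ∧ B.card = d) ∧ T.card ≤ p ∧
  ∀ C : Finset ℕ, C ⊆ Finset.Icc 1 n → C.card + 1 = d →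
    ∀ x ∈ Finset.Icc 1 n, ∀ y ∈ Finset.Icc 1 n, ∀ z ∈ Finset.Icc 1 n,
    x ∉ C → y ∉ C → z ∉ C → x < y → y < z →
    ((insert x C ∈ T ↔ insert z C ∈ T) → (insert y C ∈ T ↔ insert x C ∈ T))

def LeftAt (n : ℕ) (T : Finset (Finset ℕ)) (B : Finset ℕ) (c : ℕ) : Prop :=
  ∀ w ∈ Finset.Icc 1 n, w ∉ B → w < c → insert w (B.erase c) ∈ T

def RightAt (n : ℕ) (T : Finset (Finset ℕ)) (B : Finset ℕ) (c : ℕ) : Prop :=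
  ∀ w ∈ Finset.Icc 1 n, w ∉ B → c < w → insert w (B.erase c) ∈ T

/-- Few sets, and every element of every set is left or right. -/
def Lab (n d : ℕ) (T : Finset (Finset ℕ)) : Prop :=
  (∀ B ∈ T, B ⊆ Finset.Icc 1 n ∧ B.card = d) ∧ T.card + d ≤ n ∧
  ∀ B ∈ T, ∀ c ∈ B, LeftAt n T B c ∨ RightAt n T B c

theorem count_tool {α : Type*} [DecidableEq α] (n : ℕ) (U : Finset (Finset α)) (B : Finset α)
    (hB : B ∈ U) (g : ℕ → α) (hg : Set.InjOn g (Finset.Icc 1 n : Finset ℕ))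
    (H : ∀ w ∈ Finset.Icc 1 n, g w ∉ B → ∃ h ∈ B, insert (g w) (B.erase h) ∈ U) :
    n + 1 ≤ U.card + B.card := by
  classical
  have h1 : ((Finset.Icc 1 n).filter (fun w => g w ∈ B)).card ≤ B.card := by
    apply Finset.card_le_card_of_injOn g
    · intro w hw; simp at hw; exact hw.2
    · intro a ha b hb hab
      simp at ha hb
      exact hg (by simpa using ha.1) (by simpa using hb.1) hab
  have h2 : ((Finset.Icc 1 n).filter (fun w => ¬ g w ∈ B)).card ≤ (U.erase B).card := by
    have : Nonempty α := ⟨g 0⟩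
    choose! h hh hU using H
    apply Finset.card_le_card_of_injOn (fun w => insert (g w) (B.erase (h w)))
    · intro w hw
      simp only [Finset.coe_filter, Set.mem_ofPred_eq] at hw
      simp only [Finset.coe_erase, Set.mem_sdiff, Finset.mem_coe, Set.mem_singleton_iff]
      refine ⟨hU w hw.1 hw.2, fun he => hw.2 ?_⟩
      rw [← he]; simp
    · intro a ha b hb hab
      simp only [Finset.coe_filter, Set.mem_ofPred_eq] at ha hb
      apply hg (by simpa using ha.1) (by simpa using hb.1)
      have h3 : g a ∈ insert (g b) (B.erase (h b)) := by
        rw [← show insert (g a) (B.erase (h a)) = insert (g b) (B.erase (h b)) from hab]; simp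
      simp only [Finset.mem_insert, Finset.mem_erase] at h3
      tauto
  have h3 := Finset.card_filter_add_card_filter_not (s := Finset.Icc 1 n) (fun w => g w ∈ B)
  have h4 := Finset.card_erase_add_one hB
  simp at h3
  omega

theorem Lab.not_both {n d : ℕ} {T : Finset (Finset ℕ)} (hT : Lab n d T) {B : Finset ℕ}
    (hB : B ∈ T) {c : ℕ} (hc : c ∈ B) (hl : LeftAt n T B c) (hr : RightAt n T B c) : False := by
  have := count_tool n T B hB id (Set.injOn_id _) (by
    intro w hw hwB
    refine ⟨c, hc, ?_⟩
    rcases lt_trichotomy w c with h | h | h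
    · exact hl w hw hwB h
    · subst h; exact absurd hc hwB
    · exact hr w hw hwB h)
  have h1 := (hT.1 B hB).2
  have h2 := hT.2.1
  omega

theorem Lab.not_cross {n d : ℕ} {T : Finset (Finset ℕ)} (hT : Lab n d T) {B : Finset ℕ}
    (hB : B ∈ T) {c e : ℕ} (hc : c ∈ B) (he : e ∈ B) (hce : c < e)
    (hr : RightAt n T B c) (hl : LeftAt n T B e) : False := by
  have := count_tool n T B hB id (Set.injOn_id _) (by
    intro w hw hwB
    rcases lt_trichotomy w e with h | h | h
    · exact ⟨e, he, hl w hw hwB h⟩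
    · subst h; exact absurd he hwB
    · exact ⟨c, hc, hr w hw hwB (hce.trans h)⟩)
  have h1 := (hT.1 B hB).2
  have h2 := hT.2.1
  omega

theorem Lab.conflict {n d : ℕ} {T : Finset (Finset ℕ)} (hT : Lab n d T) {C : Finset ℕ}
    {x y c : ℕ} (hx : x ∉ C) (hy : y ∉ C) (hxT : insert x C ∈ T) (hyT : insert y C ∈ T)
    (hc : c ∈ C) (hl : LeftAt n T (insert x C) c) (hr : RightAt n T (insert y C) c) : False := by
  have hCd : C.card + 1 = d := by
    rw [← (hT.1 _ hxT).2, Finset.card_insert_of_notMem hx]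
  have hCn : C ⊆ Finset.Icc 1 n := (Finset.subset_insert _ _).trans (hT.1 _ hxT).1
  have key : (Finset.Icc 1 n \ C).card ≤ T.card := by
    apply Finset.card_le_card_of_injOn (fun w => if w = x ∨ w = y then insert w C else
      if w < c then insert w ((insert x C).erase c) else insert w ((insert y C).erase c))
    · intro w hw
      simp only [Finset.coe_sdiff, Set.mem_sdiff, Finset.mem_coe] at hw
      obtain ⟨hw1, hw2⟩ := hw
      simp only [Finset.mem_coe]
      have hwc : w ≠ c := fun h => hw2 (h ▸ hc)
      split_ifs with h1 h2
      · rcases h1 with rfl | rfl <;> assumption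
      · push Not at h1
        exact hl w hw1 (by simp [h1.1, hw2]) h2
      · push Not at h1
        exact hr w hw1 (by simp [h1.2, hw2]) (by omega)
    · intro a ha b hb hab
      simp only [Finset.coe_sdiff, Set.mem_sdiff, Finset.mem_coe] at ha hb
      obtain ⟨ha1, ha2⟩ := ha
      obtain ⟨hb1, hb2⟩ := hb
      have hac : a ≠ c := fun h => ha2 (h ▸ hc)
      have hbc : b ≠ c := fun h => hb2 (h ▸ hc)
      have hxc : x ≠ c := fun h => hx (h ▸ hc)
      have hyc : y ≠ c := fun h => hy (h ▸ hc)
      have E := Finset.ext_iff.1 hab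
      have Ea := E a
      have Eb := E b
      have Ec := E c
      have Ex := E x
      have Ey := E y
      clear E hab hl hr
      dsimp only at Ea Eb Ec Ex Ey
      split_ifs at Ea Eb Ec Ex Ey <;> simp at Ea Eb Ec Ex Ey <;> grind
  rw [Finset.card_sdiff_of_subset hCn] at key
  have h2 := hT.2.1
  have h3 := Finset.card_le_card hCn
  simp at key h3
  omega

theorem Lab.left_iff {n d : ℕ} {T : Finset (Finset ℕ)} (hT : Lab n d T) {C : Finset ℕ}
    {x y c : ℕ} (hx : x ∉ C) (hy : y ∉ C) (hxT : insert x C ∈ T) (hyT : insert y C ∈ T)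
    (hc : c ∈ C) : LeftAt n T (insert x C) c ↔ LeftAt n T (insert y C) c := by
  have h1 := hT.2.2 _ hxT c (by simp [hc])
  have h2 := hT.2.2 _ hyT c (by simp [hc])
  have h3 := hT.conflict hx hy hxT hyT hc
  have h4 := hT.conflict hy hx hyT hxT hc
  tauto

theorem FinCo.lab {n d p : ℕ} (hp : p + d ≤ n) {T : Finset (Finset ℕ)} (hT : FinCo n d p T) :
    Lab n d T := by
  refine ⟨hT.1, by have := hT.2.1; omega, ?_⟩
  intro B hB c hc
  by_contra hcon
  simp only [LeftAt, RightAt] at hcon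
  push Not at hcon
  obtain ⟨⟨x, hx, hxB, hxc, hxT⟩, z, hz, hzB, hcz, hzT⟩ := hcon
  obtain ⟨hBn, hBd⟩ := hT.1 B hB
  have := hT.2.2 (B.erase c) ((Finset.erase_subset _ _).trans hBn)
    (by rw [Finset.card_erase_add_one hc, hBd]) x hx c (hBn hc) z hz
    (by simp [hxB]) (by simp) (by simp [hzB]) hxc hcz
  rw [Finset.insert_erase hc] at this
  tauto

theorem FinCo.not_ends {n d p : ℕ} (hp : p + d ≤ n) {T : Finset (Finset ℕ)} (hT : FinCo n d p T)
    {C : Finset ℕ} {x z : ℕ} (hx : x ∉ C) (hz : z ∉ C) (hxT : insert x C ∈ T)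
    (hzT : insert z C ∈ T) (hl : LeftAt n T (insert x C) x) (hr : RightAt n T (insert z C) z) :
    False := by
  obtain ⟨hBn, hBd⟩ := hT.1 _ hxT
  have hzn := (hT.1 _ hzT).1 (Finset.mem_insert_self z C)
  have := count_tool n T _ hxT id (Set.injOn_id _) (by
    intro w hw hwB
    refine ⟨x, by simp, ?_⟩
    simp only [id] at hwB ⊢
    rcases lt_trichotomy w x with h | h | h
    · exact hl w hw hwB h
    · subst h; simp at hwB
    · rw [Finset.erase_insert hx]
      simp at hwB
      rcases lt_trichotomy w z with h' | h' | h'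
      · have := hT.2.2 C ((Finset.subset_insert _ _).trans hBn)
          (by rw [← hBd, Finset.card_insert_of_notMem hx]) x (hBn (by simp)) w hw z hzn
          hx (by tauto) hz h h'
        tauto
      · subst h'; exact hzT
      · have := hr w hw (by simp; constructor; omega; tauto) h'
        rwa [Finset.erase_insert hz] at this)
  have h2 := hT.2.1
  omega

/-- Stable (labelled) co-signotopes: elements are pairs (end, distance from that end). -/
def Inf (d p : ℕ) (U : Finset (Finset (Bool × ℕ))) : Prop :=
  (∀ B ∈ U, B.card = d ∧ ∀ e ∈ B, 1 ≤ e.2) ∧ U.card ≤ p ∧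
  (∀ B ∈ U, ∀ s k k', (s, k) ∈ B → 1 ≤ k' → k' < k → (s, k') ∉ B →
    insert (s, k') (B.erase (s, k)) ∈ U) ∧
  (∀ D k l, (true, k) ∉ D → (false, l) ∉ D → insert (true, k) D ∈ U →
    insert (false, l) D ∈ U → False)

def posn (n : ℕ) (e : Bool × ℕ) : ℕ := if e.1 = true then e.2 else n + 1 - e.2

open Classical in
noncomputable def labn (n : ℕ) (T : Finset (Finset ℕ)) (B : Finset ℕ) (c : ℕ) : Bool × ℕ :=
  if LeftAt n T B c then (true, c) else (false, n + 1 - c)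

noncomputable def liftn (n : ℕ) (T : Finset (Finset ℕ)) (B : Finset ℕ) : Finset (Bool × ℕ) :=
  B.image (labn n T B)

noncomputable def upn (n : ℕ) (T : Finset (Finset ℕ)) : Finset (Finset (Bool × ℕ)) :=
  T.image (liftn n T)

noncomputable def downn (n : ℕ) (U : Finset (Finset (Bool × ℕ))) : Finset (Finset ℕ) :=
  U.image (fun B => B.image (posn n))

theorem posn_labn (n : ℕ) (T : Finset (Finset ℕ)) (B : Finset ℕ) (c : ℕ)
    (hc : c ∈ Finset.Icc 1 n) : posn n (labn n T B c) = c := by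
  simp at hc
  unfold posn labn
  split_ifs with h1 h2 h2
  · rfl
  · simp at h2
  · simp at h2
  · simp; omega

theorem image_posn (n : ℕ) (T : Finset (Finset ℕ)) (B C : Finset ℕ) (hC : C ⊆ Finset.Icc 1 n) :
    (C.image (labn n T B)).image (posn n) = C := by
  rw [Finset.image_image]
  conv_rhs => rw [← Finset.image_id (s := C)]
  apply Finset.image_congr
  intro c hc
  exact posn_labn n T B c (hC hc)

theorem labn_injOn (n : ℕ) (T : Finset (Finset ℕ)) (B C : Finset ℕ) (hC : C ⊆ Finset.Icc 1 n) :
    Set.InjOn (labn n T B) C := by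
  intro a ha b hb hab
  rw [← posn_labn n T B a (hC ha), ← posn_labn n T B b (hC hb), hab]

theorem labn_notMem (n : ℕ) (T : Finset (Finset ℕ)) (B C : Finset ℕ) (x : ℕ)
    (hC : insert x C ⊆ Finset.Icc 1 n) (hx : x ∉ C) :
    labn n T B x ∉ C.image (labn n T B) := by
  intro h
  obtain ⟨c, hc, he⟩ := Finset.mem_image.1 h
  have := labn_injOn n T B _ hC (by simp [hc]) (by simp) he
  exact hx (this ▸ hc)

theorem Lab.image_congr {n d : ℕ} {T : Finset (Finset ℕ)} (hT : Lab n d T) {C : Finset ℕ}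
    {x y : ℕ} (hx : x ∉ C) (hy : y ∉ C) (hxT : insert x C ∈ T) (hyT : insert y C ∈ T) :
    C.image (labn n T (insert x C)) = C.image (labn n T (insert y C)) := by
  apply Finset.image_congr
  intro c hc
  have h5 := hT.left_iff hx hy hxT hyT hc
  unfold labn
  split_ifs <;> first | rfl | tauto

theorem liftn_insert (n : ℕ) (T : Finset (Finset ℕ)) (C : Finset ℕ) (x : ℕ) :
    liftn n T (insert x C) =
      insert (labn n T (insert x C) x) (C.image (labn n T (insert x C))) := by
  rw [liftn, Finset.image_insert]

theorem downn_upn {n d : ℕ} {T : Finset (Finset ℕ)} (hT : Lab n d T) : downn n (upn n T) = T := by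
  rw [downn, upn, Finset.image_image]
  conv_rhs => rw [← Finset.image_id (s := T)]
  apply Finset.image_congr
  intro B hB
  exact image_posn n T B B (hT.1 B hB).1

theorem card_upn {n d : ℕ} {T : Finset (Finset ℕ)} (hT : Lab n d T) : (upn n T).card = T.card := by
  apply le_antisymm Finset.card_image_le
  conv_lhs => rw [← downn_upn hT]
  exact Finset.card_image_le

theorem upn_mono {n d : ℕ} {T T' : Finset (Finset ℕ)} (hT : Lab n d T) (hT' : Lab n d T')
    (h : T ⊆ T') : upn n T ⊆ upn n T' := by
  intro E hE
  obtain ⟨B, hB, rfl⟩ := Finset.mem_image.1 hE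
  refine Finset.mem_image.2 ⟨B, h hB, ?_⟩
  apply Finset.image_congr
  intro c hc
  have h1 : LeftAt n T B c → LeftAt n T' B c := fun H w a b c => h (H w a b c)
  have h2 : RightAt n T B c → RightAt n T' B c := fun H w a b c => h (H w a b c)
  have h3 := hT'.not_both (h hB) hc
  have h4 := hT.2.2 B hB c hc
  have h5 : LeftAt n T' B c ↔ LeftAt n T B c := by tauto
  unfold labn
  split_ifs <;> first | rfl | tauto

theorem labn_left {n : ℕ} {T : Finset (Finset ℕ)} {B : Finset ℕ} {c k : ℕ} :
    labn n T B c = (true, k) ↔ LeftAt n T B c ∧ c = k := by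
  unfold labn
  split_ifs with h <;> simp [h]

theorem labn_right {n : ℕ} {T : Finset (Finset ℕ)} {B : Finset ℕ} {c k : ℕ} :
    labn n T B c = (false, k) ↔ ¬ LeftAt n T B c ∧ n + 1 - c = k := by
  unfold labn
  split_ifs with h <;> simp [h]

theorem inf_upn {n d p : ℕ} (hp : p + d ≤ n) {T : Finset (Finset ℕ)} (hT : FinCo n d p T) :
    Inf d p (upn n T) := by
  have hL := hT.lab hp
  refine ⟨?_, ?_, ?_, ?_⟩
  · intro E hE
    obtain ⟨B, hB, rfl⟩ := Finset.mem_image.1 hE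
    obtain ⟨hBn, hBd⟩ := hT.1 B hB
    refine ⟨?_, ?_⟩
    · rw [liftn, Finset.card_image_of_injOn (labn_injOn n T B B hBn), hBd]
    · intro e he
      obtain ⟨c, hc, rfl⟩ := Finset.mem_image.1 he
      have := hBn hc
      simp at this
      unfold labn
      split_ifs <;> simp <;> omega
  · rw [card_upn hL]; exact hT.2.1
  · intro E hE s k k' hk h1 hkk hk'
    obtain ⟨B, hB, rfl⟩ := Finset.mem_image.1 hE
    obtain ⟨hBn, hBd⟩ := hT.1 B hB
    obtain ⟨c, hc, hck⟩ := Finset.mem_image.1 hk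
    have hcn := hBn hc
    obtain ⟨C, hcC, rfl⟩ : ∃ C, c ∉ C ∧ B = insert c C :=
      ⟨B.erase c, by simp, (Finset.insert_erase hc).symm⟩
    have hlab := hL.2.2 _ hB
    suffices hw : ∃ w, w ∉ insert c C ∧ insert w C ∈ T ∧ labn n T (insert w C) w = (s, k') by
      obtain ⟨w, hwC, hwT, hws⟩ := hw
      have hwC' : w ∉ C := fun h => hwC (by simp [h])
      refine Finset.mem_image.2 ⟨insert w C, hwT, ?_⟩
      rw [liftn_insert, hws, liftn_insert, hck, Finset.erase_insert]
      · rw [hL.image_congr hwC' hcC hwT hB]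
      · rw [← hck]; exact labn_notMem n T _ C c hBn hcC
    simp only [Finset.mem_Icc] at hcn
    cases s with
    | true =>
      obtain ⟨hl, rfl⟩ := labn_left.1 hck
      have hwn : k' ∈ Finset.Icc 1 n := by simp; omega
      have hwB : k' ∉ insert c C := by
        intro hw
        have h2 : ¬ LeftAt n T (insert c C) k' := fun h =>
          hk' (Finset.mem_image.2 ⟨k', hw, labn_left.2 ⟨h, rfl⟩⟩)
        have h3 := (hlab k' hw).resolve_left h2
        exact hL.not_cross hB hw hc hkk h3 hl
      have hwT := hl k' hwn hwB hkk
      rw [Finset.erase_insert hcC] at hwT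
      refine ⟨k', hwB, hwT, labn_left.2 ⟨?_, rfl⟩⟩
      have hkC : k' ∉ C := fun h => hwB (by simp [h])
      intro v hv hvB hvk
      simp at hvB
      have := hl v hv (by simp; constructor; omega; tauto) (by omega)
      rw [Finset.erase_insert hcC] at this
      rwa [Finset.erase_insert hkC]
    | false =>
      obtain ⟨hl, rfl⟩ := labn_right.1 hck
      have hr := (hlab c hc).resolve_left hl
      have hwn : n + 1 - k' ∈ Finset.Icc 1 n := by simp; omega
      have hwk : n + 1 - (n + 1 - k') = k' := by omega
      have hcw : c < n + 1 - k' := by omega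
      generalize n + 1 - k' = w at *
      have hwB : w ∉ insert c C := by
        intro hw
        have h2 : LeftAt n T (insert c C) w := by
          by_contra h
          exact hk' (Finset.mem_image.2 ⟨w, hw, labn_right.2 ⟨h, hwk⟩⟩)
        exact hL.not_cross hB hc hw hcw hr h2
      have hwT := hr w hwn hwB hcw
      rw [Finset.erase_insert hcC] at hwT
      refine ⟨w, hwB, hwT, labn_right.2 ⟨fun hlw => ?_, hwk⟩⟩
      refine hL.not_both hwT (by simp) hlw ?_
      have hkC : w ∉ C := fun h => hwB (by simp [h])
      intro v hv hvB hvk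
      simp at hvB
      have := hr v hv (by simp; constructor; omega; tauto) (by omega)
      rw [Finset.erase_insert hcC] at this
      rwa [Finset.erase_insert hkC]
  · intro D k l hkD hlD hkU hlU
    have key : ∀ e, e ∉ D → insert e D ∈ upn n T → ∃ C c, c ∉ C ∧ insert c C ∈ T ∧
        labn n T (insert c C) c = e ∧ C = D.image (posn n) := by
      intro e heD heU
      obtain ⟨B, hB, hBe⟩ := Finset.mem_image.1 heU
      have heB : e ∈ liftn n T B := by rw [hBe]; simp
      obtain ⟨c, hc, hce⟩ := Finset.mem_image.1 heB
      obtain ⟨C, hcC, rfl⟩ : ∃ C, c ∉ C ∧ B = insert c C :=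
        ⟨B.erase c, by simp, (Finset.insert_erase hc).symm⟩
      refine ⟨C, c, hcC, hB, hce, ?_⟩
      have hBn := (hT.1 _ hB).1
      have h1 : C.image (labn n T (insert c C)) = D := by
        have h2 := congrArg (fun s => s.erase e) hBe
        rw [Finset.erase_insert heD, liftn_insert, hce, Finset.erase_insert] at h2
        · exact h2
        · rw [← hce]; exact labn_notMem n T _ C c hBn hcC
      rw [← h1, image_posn n T _ C ((Finset.subset_insert _ _).trans hBn)]
    obtain ⟨C, c, hc, hcT, hcl, rfl⟩ := key _ hkD hkU
    obtain ⟨C', c', hc', hcT', hcl', rfl⟩ := key _ hlD hlU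
    exact hT.not_ends hp hc hc' hcT hcT' (labn_left.1 hcl).1
      ((hL.2.2 _ hcT' _ (by simp)).resolve_left (labn_right.1 hcl').1)

theorem Inf.le_n {n d p : ℕ} (hp : p + d ≤ n) {U : Finset (Finset (Bool × ℕ))} (hU : Inf d p U)
    {B : Finset (Bool × ℕ)} (hB : B ∈ U) {s : Bool} {k : ℕ} (he : (s, k) ∈ B) : k ≤ n := by
  by_contra hk
  have := count_tool n U B hB (fun w => (s, w)) (by intro a _ b _ h; simpa using h) (by
    intro w hw hwB
    simp at hw
    exact ⟨_, he, hU.2.2.1 B hB s k w he hw.1 (by omega) hwB⟩)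
  have h1 := (hU.1 B hB).1
  have h2 := hU.2.1
  omega

theorem Inf.add_ne {n d p : ℕ} (hp : p + d ≤ n) {U : Finset (Finset (Bool × ℕ))} (hU : Inf d p U)
    {B : Finset (Bool × ℕ)} (hB : B ∈ U) {k l : ℕ} (hk : (true, k) ∈ B) (hl : (false, l) ∈ B) :
    k + l ≠ n + 1 := by
  intro hkl
  have := count_tool n U B hB (fun w => if w ≤ k then (true, w) else (false, n + 1 - w)) (by
    intro a ha b hb h
    simp at ha hb
    dsimp only at h
    split_ifs at h <;> simp at h <;> omega) (by
    intro w hw hwB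
    simp at hw
    split_ifs at hwB ⊢ with h
    · have hne : w ≠ k := by rintro rfl; exact hwB hk
      exact ⟨_, hk, hU.2.2.1 B hB _ k w hk hw.1 (by omega) hwB⟩
    · exact ⟨_, hl, hU.2.2.1 B hB _ l _ hl (by omega) (by omega) hwB⟩)
  have h1 := (hU.1 B hB).1
  have h2 := hU.2.1
  omega

theorem Inf.posn_mem {n d p : ℕ} (hp : p + d ≤ n) {U : Finset (Finset (Bool × ℕ))}
    (hU : Inf d p U) {B : Finset (Bool × ℕ)} (hB : B ∈ U) {e : Bool × ℕ} (he : e ∈ B) :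
    posn n e ∈ Finset.Icc 1 n := by
  obtain ⟨s, k⟩ := e
  have h1 := hU.le_n hp hB he
  have h2 := (hU.1 B hB).2 _ he
  simp at h2
  cases s <;> simp [posn] <;> omega

theorem Inf.injOn {n d p : ℕ} (hp : p + d ≤ n) {U : Finset (Finset (Bool × ℕ))}
    (hU : Inf d p U) {B : Finset (Bool × ℕ)} (hB : B ∈ U) : Set.InjOn (posn n) B := by
  rintro ⟨s, k⟩ he ⟨t, l⟩ hf h
  have h1 := hU.le_n hp hB he
  have h2 := hU.le_n hp hB hf
  cases s <;> cases t <;> simp [posn] at h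
  · simp; omega
  · have := hU.add_ne hp hB hf he
    omega
  · have := hU.add_ne hp hB he hf
    omega
  · simp [h]

theorem image_erase_of_injOn {α β : Type*} [DecidableEq α] [DecidableEq β] (f : α → β)
    (B : Finset α) (hf : Set.InjOn f B) (e : α) (he : e ∈ B) :
    (B.erase e).image f = (B.image f).erase (f e) := by
  ext b
  simp only [Finset.mem_image, Finset.mem_erase]
  constructor
  · rintro ⟨a, ⟨h1, h2⟩, rfl⟩
    exact ⟨fun h => h1 (hf h2 he h), a, h2, rfl⟩
  · rintro ⟨h1, a, h2, rfl⟩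
    exact ⟨a, ⟨fun h => h1 (by rw [h]), h2⟩, rfl⟩

theorem Inf.left {n d p : ℕ} (hp : p + d ≤ n) {U : Finset (Finset (Bool × ℕ))}
    (hU : Inf d p U) {B : Finset (Bool × ℕ)} (hB : B ∈ U) {k : ℕ} (he : (true, k) ∈ B) :
    LeftAt n (downn n U) (B.image (posn n)) (posn n (true, k)) := by
  intro w hw hwB hwk
  simp only [posn, if_true] at hwk
  have hwB' : (true, w) ∉ B := fun h => hwB (Finset.mem_image.2 ⟨_, h, by simp [posn]⟩)
  simp at hw
  refine Finset.mem_image.2 ⟨_, hU.2.2.1 B hB _ k w he hw.1 hwk hwB', ?_⟩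
  rw [Finset.image_insert, image_erase_of_injOn _ _ (hU.injOn hp hB) _ he]
  simp [posn]

theorem Inf.right {n d p : ℕ} (hp : p + d ≤ n) {U : Finset (Finset (Bool × ℕ))}
    (hU : Inf d p U) {B : Finset (Bool × ℕ)} (hB : B ∈ U) {k : ℕ} (he : (false, k) ∈ B) :
    RightAt n (downn n U) (B.image (posn n)) (posn n (false, k)) := by
  intro w hw hwB hwk
  have h1 := hU.le_n hp hB he
  have h2 := (hU.1 B hB).2 _ he
  simp at hw h2
  have hpw : posn n (false, n + 1 - w) = w := by simp [posn]; omega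
  have hwB' : (false, n + 1 - w) ∉ B := fun h => hwB (Finset.mem_image.2 ⟨_, h, hpw⟩)
  have hwk' : n + 1 - w < k := by simp [posn] at hwk; omega
  refine Finset.mem_image.2 ⟨_, hU.2.2.1 B hB _ k _ he (by omega) hwk' hwB', ?_⟩
  rw [Finset.image_insert, image_erase_of_injOn _ _ (hU.injOn hp hB) _ he, hpw]

theorem Inf.lab {n d p : ℕ} (hp : p + d ≤ n) {U : Finset (Finset (Bool × ℕ))}
    (hU : Inf d p U) : Lab n d (downn n U) := by
  refine ⟨?_, ?_, ?_⟩
  · intro E hE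
    obtain ⟨B, hB, rfl⟩ := Finset.mem_image.1 hE
    refine ⟨?_, ?_⟩
    · intro w hw
      obtain ⟨e, he, rfl⟩ := Finset.mem_image.1 hw
      exact hU.posn_mem hp hB he
    · rw [Finset.card_image_of_injOn (hU.injOn hp hB), (hU.1 B hB).1]
  · have h1 : (downn n U).card ≤ U.card := Finset.card_image_le
    have := hU.2.1
    omega
  · intro E hE c hc
    obtain ⟨B, hB, rfl⟩ := Finset.mem_image.1 hE
    obtain ⟨⟨s, k⟩, he, rfl⟩ := Finset.mem_image.1 hc
    cases s
    · exact Or.inr (hU.right hp hB he)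
    · exact Or.inl (hU.left hp hB he)

theorem Inf.liftn_image {n d p : ℕ} (hp : p + d ≤ n) {U : Finset (Finset (Bool × ℕ))}
    (hU : Inf d p U) {B : Finset (Bool × ℕ)} (hB : B ∈ U) :
    liftn n (downn n U) (B.image (posn n)) = B := by
  rw [liftn, Finset.image_image]
  conv_rhs => rw [← Finset.image_id (s := B)]
  apply Finset.image_congr
  rintro ⟨s, k⟩ he
  have hm : B.image (posn n) ∈ downn n U := Finset.mem_image.2 ⟨B, hB, rfl⟩
  have h1 := hU.le_n hp hB he
  simp only [Function.comp, id]
  cases s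
  · refine labn_right.2 ⟨fun hl => ?_, by simp [posn]; omega⟩
    exact (hU.lab hp).not_both hm (Finset.mem_image_of_mem _ he) hl (hU.right hp hB he)
  · exact labn_left.2 ⟨hU.left hp hB he, by simp [posn]⟩

theorem Inf.upn_downn {n d p : ℕ} (hp : p + d ≤ n) {U : Finset (Finset (Bool × ℕ))}
    (hU : Inf d p U) : upn n (downn n U) = U := by
  rw [upn]
  nth_rw 2 [downn]
  rw [Finset.image_image]
  conv_rhs => rw [← Finset.image_id (s := U)]
  apply Finset.image_congr
  intro B hB
  exact hU.liftn_image hp hB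

theorem Inf.finCo {n d p : ℕ} (hp : p + d ≤ n) {U : Finset (Finset (Bool × ℕ))}
    (hU : Inf d p U) : FinCo n d p (downn n U) := by
  have hL := hU.lab hp
  refine ⟨hL.1, Finset.card_image_le.trans hU.2.1, ?_⟩
  intro C hC hCd x hx y hy z hz hxC hyC hzC hxy hyz hxz
  have stepL : ∀ a b, b ∈ Finset.Icc 1 n → a ∉ C → b ∉ C → b < a →
      LeftAt n (downn n U) (insert a C) a → insert b C ∈ downn n U := by
    intro a b hb haC hbC hba hl
    have := hl b hb (by simp; constructor; omega; exact hbC) hba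
    rwa [Finset.erase_insert haC] at this
  have stepR : ∀ a b, b ∈ Finset.Icc 1 n → a ∉ C → b ∉ C → a < b →
      RightAt n (downn n U) (insert a C) a → insert b C ∈ downn n U := by
    intro a b hb haC hbC hba hl
    have := hl b hb (by simp; constructor; omega; exact hbC) hba
    rwa [Finset.erase_insert haC] at this
  constructor
  · intro hyT
    rcases hL.2.2 _ hyT y (by simp) with h | h
    · exact stepL y x hx hyC hxC hxy h
    · exact hxz.2 (stepR y z hz hyC hzC hyz h)
  · intro hxT
    have hzT := hxz.1 hxT
    by_contra hyT
    have hxl : LeftAt n (downn n U) (insert x C) x :=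
      (hL.2.2 _ hxT x (by simp)).resolve_right fun h => hyT (stepR x y hy hxC hyC hxy h)
    have hzl : ¬ LeftAt n (downn n U) (insert z C) z := fun h => hyT (stepL z y hy hzC hyC hyz h)
    have key : ∀ E ∈ downn n U, liftn n (downn n U) E ∈ U := by
      intro E hE
      obtain ⟨B, hB, rfl⟩ := Finset.mem_image.1 hE
      rwa [hU.liftn_image hp hB]
    have h1 := key _ hxT
    have h2 := key _ hzT
    rw [liftn_insert] at h1 h2
    have n1 := labn_notMem n (downn n U) (insert x C) C x (hL.1 _ hxT).1 hxC
    have n2 := labn_notMem n (downn n U) (insert z C) C z (hL.1 _ hzT).1 hzC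
    rw [hL.image_congr hxC hzC hxT hzT] at h1 n1
    rw [labn_left.2 ⟨hxl, rfl⟩] at h1 n1
    rw [labn_right.2 ⟨hzl, rfl⟩] at h2 n2
    exact hU.2.2.2 _ _ _ n1 n2 h1 h2

def Tof (n d : ℕ) (σ : Finset ℕ → Bool) : Finset (Finset ℕ) :=
  ((Finset.Icc 1 n).powersetCard d).filter (fun B => σ (Finset.Icc 1 n \ B) = true)

def Sof (n : ℕ) (T : Finset (Finset ℕ)) : Finset ℕ → Bool :=
  fun A => decide (A ⊆ Finset.Icc 1 n ∧ Finset.Icc 1 n \ A ∈ T)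

theorem mem_Tof {n d : ℕ} {σ : Finset ℕ → Bool} {B : Finset ℕ} :
    B ∈ Tof n d σ ↔ (B ⊆ Finset.Icc 1 n ∧ B.card = d) ∧ σ (Finset.Icc 1 n \ B) = true := by
  simp [Tof, Finset.mem_powersetCard]

theorem Sof_true {n : ℕ} {T : Finset (Finset ℕ)} {A : Finset ℕ} :
    Sof n T A = true ↔ A ⊆ Finset.Icc 1 n ∧ Finset.Icc 1 n \ A ∈ T := by
  simp [Sof]

theorem compl_compl' {n : ℕ} {A : Finset ℕ} (hA : A ⊆ Finset.Icc 1 n) :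
    Finset.Icc 1 n \ (Finset.Icc 1 n \ A) = A := by
  rw [Finset.sdiff_sdiff_eq_self hA]

theorem card_compl' {n : ℕ} {A : Finset ℕ} (hA : A ⊆ Finset.Icc 1 n) :
    (Finset.Icc 1 n \ A).card + A.card = n := by
  rw [Finset.card_sdiff_add_card_eq_card hA]; simp

theorem Tof_Sof {n d : ℕ} {T : Finset (Finset ℕ)}
    (hT : ∀ B ∈ T, B ⊆ Finset.Icc 1 n ∧ B.card = d) : Tof n d (Sof n T) = T := by
  ext B
  rw [mem_Tof, Sof_true]
  constructor
  · rintro ⟨⟨h1, h2⟩, h3, h4⟩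
    rwa [compl_compl' h1] at h4
  · intro hB
    refine ⟨hT B hB, Finset.sdiff_subset, ?_⟩
    rwa [compl_compl' (hT B hB).1]

theorem Sof_Tof {n r d : ℕ} (hn : n = r + d) {σ : Finset ℕ → Bool}
    (hσ : ∀ A, σ A = true → A ⊆ Finset.Icc 1 n ∧ A.card = r) : Sof n (Tof n d σ) = σ := by
  ext A
  rw [Bool.eq_iff_iff, Sof_true, mem_Tof]
  constructor
  · rintro ⟨h1, h2, h3⟩
    rwa [compl_compl' h1] at h3
  · intro hA
    obtain ⟨h1, h2⟩ := hσ A hA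
    have := card_compl' h1
    refine ⟨h1, ⟨Finset.sdiff_subset, by omega⟩, ?_⟩
    rwa [compl_compl' h1]

theorem card_Tof {n r d : ℕ} (hn : n = r + d) {σ : Finset ℕ → Bool}
    (hσ : ∀ A, σ A = true → A ⊆ Finset.Icc 1 n ∧ A.card = r) :
    (Tof n d σ).card = plusCount σ := by
  have h1 : {A : Finset ℕ | σ A = true} =
      Set.image (fun B => Finset.Icc 1 n \ B) (Tof n d σ : Set (Finset ℕ)) := by
    ext A
    simp only [Set.mem_ofPred_eq, Set.mem_image, Finset.mem_coe, mem_Tof]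
    constructor
    · intro hA
      obtain ⟨h1, h2⟩ := hσ A hA
      have := card_compl' h1
      exact ⟨Finset.Icc 1 n \ A, ⟨⟨Finset.sdiff_subset, by omega⟩, by rwa [compl_compl' h1]⟩,
        compl_compl' h1⟩
    · rintro ⟨B, ⟨_, h⟩, rfl⟩
      exact h
  rw [plusCount, h1, Set.InjOn.ncard_image, Set.ncard_coe_finset]
  intro a ha b hb hab
  rw [Finset.mem_coe, mem_Tof] at ha hb
  rw [← compl_compl' ha.1.1, ← compl_compl' hb.1.1]
  simp only at hab
  rw [hab]

theorem sdiff_insert' {n : ℕ} {X : Finset ℕ} (hX : X ⊆ Finset.Icc 1 n) {x : ℕ} :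
    Finset.Icc 1 n \ insert x (Finset.Icc 1 n \ X) = X.erase x := by
  ext a
  have := @hX a
  simp only [Finset.mem_sdiff, Finset.mem_insert, Finset.mem_erase]
  tauto

theorem sdiff_erase' {n : ℕ} {X : Finset ℕ} {x : ℕ} (hx : x ∈ Finset.Icc 1 n) :
    Finset.Icc 1 n \ X.erase x = insert x (Finset.Icc 1 n \ X) := by
  ext a
  simp only [Finset.mem_sdiff, Finset.mem_insert, Finset.mem_erase]
  by_cases h : a = x
  · subst h; simp [hx]
  · simp [h]

theorem finCo_Tof {n r d p : ℕ} (hn : n = r + d) {σ : Finset ℕ → Bool}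
    (hσ : σ ∈ sigSetLe n r p) : FinCo n d p (Tof n d σ) := by
  obtain ⟨⟨h1, h2⟩, h3⟩ := hσ
  refine ⟨fun B hB => (mem_Tof.1 hB).1, by rw [card_Tof hn h1]; exact h3, ?_⟩
  intro C hC hCd x hx y hy z hz hxC hyC hzC hxy hyz
  have hc := card_compl' hC
  have key := (signChanges_sort_iff _ _).1 (h2 (Finset.Icc 1 n \ C) Finset.sdiff_subset (by omega))
    x (by simp [hxC, -Finset.mem_Icc, hx]) y (by simp [hyC, -Finset.mem_Icc, hy])
    z (by simp [hzC, -Finset.mem_Icc, hz]) hxy hyz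
  have mem : ∀ w ∈ Finset.Icc 1 n, w ∉ C →
      (insert w C ∈ Tof n d σ ↔ σ ((Finset.Icc 1 n \ C).erase w) = true) := by
    intro w hw hwC
    rw [mem_Tof, ← sdiff_insert' Finset.sdiff_subset, compl_compl' hC,
      Finset.card_insert_of_notMem hwC]
    simp [hCd, Finset.insert_subset_iff, hC, -Finset.mem_Icc, hw]
  rw [mem x hx hxC, mem y hy hyC, mem z hz hzC, ← Bool.eq_iff_iff, ← Bool.eq_iff_iff]
  exact key

theorem sig_Sof {n r d p : ℕ} (hn : n = r + d) {T : Finset (Finset ℕ)}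
    (hT : FinCo n d p T) : Sof n T ∈ sigSetLe n r p := by
  have h1 : ∀ A, Sof n T A = true → A ⊆ Finset.Icc 1 n ∧ A.card = r := by
    intro A hA
    rw [Sof_true] at hA
    have h := (hT.1 _ hA.2).2
    have := card_compl' hA.1
    exact ⟨hA.1, by omega⟩
  refine ⟨⟨h1, ?_⟩, by rw [← card_Tof hn h1, Tof_Sof hT.1]; exact hT.2.1⟩
  intro X hX hXr
  rw [signChanges_sort_iff]
  intro x hx y hy z hz hxy hyz
  have hc := card_compl' hX
  have key := hT.2.2 (Finset.Icc 1 n \ X) Finset.sdiff_subset (by omega) x (hX hx) y (hX hy)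
    z (hX hz) (by simp [hx]) (by simp [hy]) (by simp [hz]) hxy hyz
  have mem : ∀ w ∈ X, (Sof n T (X.erase w) = true ↔ insert w (Finset.Icc 1 n \ X) ∈ T) := by
    intro w hw
    rw [Sof_true, sdiff_erase' (hX hw)]
    simp [(Finset.erase_subset w X).trans hX]
  rw [← mem x hx, ← mem y hy, ← mem z hz, ← Bool.eq_iff_iff, ← Bool.eq_iff_iff] at key
  exact key

theorem Tof_mono {n d : ℕ} {σ τ : Finset ℕ → Bool}
    (h : {A | σ A = true} ⊆ {A | τ A = true}) : Tof n d σ ⊆ Tof n d τ := by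
  intro B hB
  rw [mem_Tof] at *
  exact ⟨hB.1, h hB.2⟩

theorem Sof_mono {n : ℕ} {T T' : Finset (Finset ℕ)} (h : T ⊆ T') :
    {A | Sof n T A = true} ⊆ {A | Sof n T' A = true} := by
  intro A hA
  simp only [Set.mem_ofPred_eq, Sof_true] at *
  exact ⟨hA.1, h hA.2⟩

noncomputable def stableEquiv (n r d p : ℕ) (hn : n = r + d) (hp : p ≤ r) :
    ↥(sigSetLe n r p) ≃ {U // Inf d p U} where
  toFun σ := ⟨upn n (Tof n d σ.1), inf_upn (by omega) (finCo_Tof hn σ.2)⟩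
  invFun U := ⟨Sof n (downn n U.1), sig_Sof hn (U.2.finCo (by omega))⟩
  left_inv σ := by
    apply Subtype.ext
    simp only
    rw [downn_upn ((finCo_Tof hn σ.2).lab (by omega)), Sof_Tof hn σ.2.1.1]
  right_inv U := by
    apply Subtype.ext
    simp only
    rw [Tof_Sof (U.2.finCo (by omega)).1, U.2.upn_downn (by omega)]

theorem stableEquiv_card (n r d p : ℕ) (hn : n = r + d) (hp : p ≤ r) (σ : ↥(sigSetLe n r p)) :
    (stableEquiv n r d p hn hp σ).1.card = plusCount σ.1 := by
  rw [← card_Tof hn σ.2.1.1]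
  exact card_upn ((finCo_Tof hn σ.2).lab (by omega))

theorem stableEquiv_mono (n r d p : ℕ) (hn : n = r + d) (hp : p ≤ r) (σ τ : ↥(sigSetLe n r p)) :
    {A | σ.1 A = true} ⊆ {A | τ.1 A = true} ↔
      (stableEquiv n r d p hn hp σ).1 ⊆ (stableEquiv n r d p hn hp τ).1 := by
  constructor
  · intro h
    exact upn_mono ((finCo_Tof hn σ.2).lab (by omega)) ((finCo_Tof hn τ.2).lab (by omega))
      (Tof_mono h)
  · intro h
    have h1 := Sof_mono (n := n) (Finset.image_subset_image (f := fun B => B.image (posn n)) h)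
    have h2 : ∀ ρ, Sof n ((stableEquiv n r d p hn hp ρ).1.image (fun B => B.image (posn n))) = ρ.1 :=
      fun ρ => congrArg Subtype.val ((stableEquiv n r d p hn hp).left_inv ρ)
    rwa [h2, h2] at h1

theorem bruhat_transfer {n r tn tr p : ℕ} (Φ : ↥(sigSetLe n r p) ≃ ↥(sigSetLe tn tr p))
    (hc : ∀ σ, plusCount (Φ σ).1 = plusCount σ.1)
    (hm : ∀ σ τ : ↥(sigSetLe n r p), {A | σ.1 A = true} ⊆ {A | τ.1 A = true} ↔
      {A | (Φ σ).1 A = true} ⊆ {A | (Φ τ).1 A = true})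
    (σ σ' : ↥(sigSetLe n r p)) (h : BruhatLe n r σ.1 σ'.1) :
    BruhatLe tn tr (Φ σ).1 (Φ σ').1 := by
  obtain ⟨b, hb⟩ := σ'
  simp only at h
  induction h with
  | refl => exact Relation.ReflTransGen.refl
  | @tail b c hab hbc ih =>
    obtain ⟨h1, h2, h3, h4⟩ := hbc
    have hb' : b ∈ sigSetLe n r p := ⟨h1, by have := hb.2; omega⟩
    refine Relation.ReflTransGen.tail (ih hb') ⟨(Φ _).2.1, (Φ _).2.1, ?_, ?_⟩
    · rw [ssubset_iff_subset_not_subset] at h3 ⊢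
      exact ⟨(hm ⟨b, hb'⟩ ⟨c, hb⟩).1 h3.1, fun h => h3.2 ((hm ⟨c, hb⟩ ⟨b, hb'⟩).2 h)⟩
    · rw [hc, hc]; exact h4

/-- **Theorem (main bijection, signotope form).** If `n - r = ñ - r̃ = d` and
`p ≤ min {r, r̃}`, then there is a bijection between `𝒮_{≤p}(n,r)` and `𝒮_{≤p}(ñ,r̃)`
preserving the higher Bruhat order. -/
theorem statement0 (n tn r tr d p : ℕ) (hr : 1 ≤ r) (htr : 1 ≤ tr)
    (hn : n = r + d) (htn : tn = tr + d) (hp : p ≤ min r tr) :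
    ∃ Φ : ↥(sigSetLe n r p) ≃ ↥(sigSetLe tn tr p),
      ∀ σ σ' : ↥(sigSetLe n r p),
        BruhatLe n r σ.1 σ'.1 ↔ BruhatLe tn tr (Φ σ).1 (Φ σ').1 := by

  have h1 : p ≤ r := hp.trans (min_le_left _ _)
  have h2 : p ≤ tr := hp.trans (min_le_right _ _)
  let e := stableEquiv n r d p hn h1
  let f := stableEquiv tn tr d p htn h2
  let Φ := e.trans f.symm
  have hf : ∀ σ, f (Φ σ) = e σ := fun σ => f.apply_symm_apply (e σ)
  have hc : ∀ σ, plusCount (Φ σ).1 = plusCount σ.1 := by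
    intro σ
    rw [← stableEquiv_card n r d p hn h1 σ, ← stableEquiv_card tn tr d p htn h2 (Φ σ)]
    exact congrArg (fun U => U.1.card) (hf σ)
  have hm : ∀ σ τ : ↥(sigSetLe n r p), {A | σ.1 A = true} ⊆ {A | τ.1 A = true} ↔
      {A | (Φ σ).1 A = true} ⊆ {A | (Φ τ).1 A = true} := by
    intro σ τ
    rw [stableEquiv_mono n r d p hn h1, stableEquiv_mono tn tr d p htn h2]
    change (e σ).1 ⊆ (e τ).1 ↔ (f (Φ σ)).1 ⊆ (f (Φ τ)).1
    rw [hf, hf]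
  refine ⟨Φ, fun σ σ' => ⟨bruhat_transfer Φ hc hm σ σ', fun h => ?_⟩⟩
  have := bruhat_transfer Φ.symm (fun σ => by rw [← hc, Equiv.apply_symm_apply])
    (fun σ τ => by rw [hm, Equiv.apply_symm_apply, Equiv.apply_symm_apply]) (Φ σ) (Φ σ') h
  rwa [Equiv.symm_apply_apply, Equiv.symm_apply_apply] at this
end

section
/- Let $n, d, p$ be non-negative integers with $0 \le d < n$. The map sending a sign function $\sigma:\binom{[n]}{n-d}\to\{+,-\}$ to the sign function $\tau:\binom{[n]}{d}\to\{+,-\}$ defined by $\tau(B)=\sigma([n]\setminus B)$ restricts to a bijection between $\mathcal{S}_p(n,n-d)$ and $\bar{\mathcal{S}}_p(n,d)$; moreover, two signotopes $\sigma,\sigma' \in \mathcal{S}(n,n-d)$ differ by a single step if and only if their images differ by a single step. -/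
/-- The complement map on sign functions. -/
def cmap (n : ℕ) (σ : Finset ℕ → Bool) (A : Finset ℕ) : Bool :=
  if A ⊆ Finset.Icc 1 n then σ (Finset.Icc 1 n \ A) else false

/-- All `+`-subsets lie in `[n]`. -/
def Supp (n : ℕ) (σ : Finset ℕ → Bool) : Prop := ∀ A, σ A = true → A ⊆ Finset.Icc 1 n

theorem cmap_supp (n : ℕ) (σ : Finset ℕ → Bool) : Supp n (cmap n σ) := by
  intro A h
  unfold cmap at h
  by_contra hA
  simp [hA] at h

theorem cmap_compl (n : ℕ) (σ : Finset ℕ → Bool) {A : Finset ℕ} (hA : A ⊆ Finset.Icc 1 n) :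
    cmap n σ (Finset.Icc 1 n \ A) = σ A := by
  unfold cmap
  rw [if_pos Finset.sdiff_subset, Finset.sdiff_sdiff_eq_self hA]

theorem cmap_cmap (n : ℕ) {σ : Finset ℕ → Bool} (h : Supp n σ) : cmap n (cmap n σ) = σ := by
  funext A
  by_cases hA : A ⊆ Finset.Icc 1 n
  · rw [show cmap n (cmap n σ) A = cmap n σ (Finset.Icc 1 n \ A) from if_pos hA,
      cmap_compl n σ hA]
  · rw [show cmap n (cmap n σ) A = false from if_neg hA]
    by_contra h'
    exact hA (h A (by simpa using (Ne.symm h')))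

theorem cmap_plus (n : ℕ) {σ : Finset ℕ → Bool} (h : Supp n σ) :
    {A | cmap n σ A = true} = (fun A => Finset.Icc 1 n \ A) '' {A | σ A = true} := by
  ext A
  constructor
  · intro hA
    have hs := cmap_supp n σ A hA
    refine ⟨Finset.Icc 1 n \ A, ?_, Finset.sdiff_sdiff_eq_self hs⟩
    have hA' : cmap n σ A = true := hA
    unfold cmap at hA'
    rwa [if_pos hs] at hA'
  · rintro ⟨B, hB, rfl⟩
    have := cmap_compl n σ (h B hB)
    exact this.trans hB

theorem cmap_plusCount (n : ℕ) {σ : Finset ℕ → Bool} (h : Supp n σ) :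
    plusCount (cmap n σ) = plusCount σ := by
  unfold plusCount
  rw [cmap_plus n h]
  apply Set.ncard_image_of_injOn
  intro A hA B hB hAB
  have := congrArg (fun X => Finset.Icc 1 n \ X) hAB
  simpa only [Finset.sdiff_sdiff_eq_self (h A hA), Finset.sdiff_sdiff_eq_self (h B hB)] using this

theorem cmap_mono (n : ℕ) {σ σ' : Finset ℕ → Bool}
    (h : {A | σ A = true} ⊆ {A | σ' A = true}) :
    {A | cmap n σ A = true} ⊆ {A | cmap n σ' A = true} := by
  intro A hA
  have hs := cmap_supp n σ A hA
  have hA' : cmap n σ A = true := hA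
  change cmap n σ' A = true
  unfold cmap at hA' ⊢
  rw [if_pos hs] at hA' ⊢
  exact h hA'

theorem cmap_step (n : ℕ) {σ σ' : Finset ℕ → Bool} (h : Supp n σ) (h' : Supp n σ')
    (hs : SingleStep σ σ') : SingleStep (cmap n σ) (cmap n σ') := by
  obtain ⟨⟨h1, h2⟩, h3⟩ := hs
  refine ⟨⟨cmap_mono n h1, fun h4 => h2 ?_⟩, ?_⟩
  · have := cmap_mono n h4
    rwa [cmap_cmap n h, cmap_cmap n h'] at this
  · rw [cmap_plusCount n h, cmap_plusCount n h', h3]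

/-- The series of the image agrees with the sequence of the signotope. -/
theorem series_cmap (n : ℕ) (σ : Finset ℕ → Bool) {X : Finset ℕ} (hX : X ⊆ Finset.Icc 1 n) :
    series n (cmap n σ) (Finset.Icc 1 n \ X) =
      (X.sort (· ≤ ·)).map fun x => σ (X.erase x) := by
  unfold series
  rw [Finset.sdiff_sdiff_eq_self hX]
  apply List.map_congr_left
  intro x hx
  have hx' : x ∈ X := by simpa using hx
  rw [show insert x (Finset.Icc 1 n \ X) = Finset.Icc 1 n \ X.erase x from ?_]
  · exact cmap_compl n σ ((Finset.erase_subset _ _).trans hX)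
  · ext y
    have := @hX x hx'
    simp only [Finset.mem_insert, Finset.mem_sdiff, Finset.mem_erase]
    by_cases hy : y = x
    · subst hy; simp [this]
    · simp [hy]

theorem cmap_sig (n d : ℕ) (hdn : d < n) {σ : Finset ℕ → Bool} (h : IsSignotope n (n - d) σ) :
    IsCoSignotope n d (cmap n σ) := by
  have hS : Supp n σ := fun A hA => (h.1 A hA).1
  refine ⟨fun A hA => ⟨cmap_supp n σ A hA, ?_⟩, fun B hB hBd b hb => ?_⟩
  · have : A ∈ {A | cmap n σ A = true} := hA
    rw [cmap_plus n hS] at this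
    obtain ⟨C, hC, rfl⟩ := this
    obtain ⟨h1, h2⟩ := h.1 C hC
    simp only [Finset.card_sdiff_of_subset h1, Nat.card_Icc]
    omega
  · have hs : B.erase b ⊆ Finset.Icc 1 n := (Finset.erase_subset _ _).trans hB
    have := h.2 (Finset.Icc 1 n \ B.erase b) Finset.sdiff_subset (by
      rw [Finset.card_sdiff_of_subset hs, Nat.card_Icc, Finset.card_erase_of_mem hb]
      have : 0 < B.card := Finset.card_pos.mpr ⟨b, hb⟩
      omega)
    rwa [← series_cmap n σ Finset.sdiff_subset, Finset.sdiff_sdiff_eq_self hs] at this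

theorem cmap_cosig (n d : ℕ) (hdn : d < n) {τ : Finset ℕ → Bool} (h : IsCoSignotope n d τ) :
    IsSignotope n (n - d) (cmap n τ) := by
  have hS : Supp n τ := fun A hA => (h.1 A hA).1
  refine ⟨fun A hA => ⟨cmap_supp n τ A hA, ?_⟩, fun X hX hXc => ?_⟩
  · have : A ∈ {A | cmap n τ A = true} := hA
    rw [cmap_plus n hS] at this
    obtain ⟨C, hC, rfl⟩ := this
    obtain ⟨h1, h2⟩ := h.1 C hC
    simp only [Finset.card_sdiff_of_subset h1, Nat.card_Icc]
    omega
  · have hle := Finset.card_le_card hX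
    rw [Nat.card_Icc] at hle
    obtain ⟨b, hb⟩ : X.Nonempty := Finset.card_pos.mp (by omega)
    have hbn : b ∉ Finset.Icc 1 n \ X := by simp [hb]
    have := h.2 (insert b (Finset.Icc 1 n \ X))
      (Finset.insert_subset (hX hb) Finset.sdiff_subset) (by
        rw [Finset.card_insert_of_notMem hbn, Finset.card_sdiff_of_subset hX, Nat.card_Icc]
        omega) b (Finset.mem_insert_self _ _)
    rw [Finset.erase_insert hbn] at this
    have h2 := series_cmap n (cmap n τ) hX
    rw [cmap_cmap n hS] at h2
    rwa [h2] at this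

/-- **Observation.** The complement map `τ(B) = σ([n] \ B)` restricts to a bijection
between `𝒮_p(n, n-d)` and `𝒮̄_p(n,d)`, and two signotopes differ by a single step iff
their images do. (Sign functions are encoded with value `-` away from the relevant
subsets of `[n]`, whence the guard `A ⊆ [n]`.) -/
theorem statement2 (n d p : ℕ) (hdn : d < n) :
    Set.BijOn (fun (σ : Finset ℕ → Bool) (A : Finset ℕ) =>
        if A ⊆ Finset.Icc 1 n then σ (Finset.Icc 1 n \ A) else false)
      (sigSet n (n - d) p) (coSigSet n d p) ∧
    ∀ σ σ' : Finset ℕ → Bool, IsSignotope n (n - d) σ → IsSignotope n (n - d) σ' →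
      (SingleStep σ σ' ↔
        SingleStep
          (fun A => if A ⊆ Finset.Icc 1 n then σ (Finset.Icc 1 n \ A) else false)
          (fun A => if A ⊆ Finset.Icc 1 n then σ' (Finset.Icc 1 n \ A) else false)) := by
  change Set.BijOn (cmap n) (sigSet n (n - d) p) (coSigSet n d p) ∧
    ∀ σ σ' : Finset ℕ → Bool, IsSignotope n (n - d) σ → IsSignotope n (n - d) σ' →
      (SingleStep σ σ' ↔ SingleStep (cmap n σ) (cmap n σ'))
  have hS : ∀ {σ}, IsSignotope n (n - d) σ → Supp n σ := fun h A hA => (h.1 A hA).1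
  have hT : ∀ {τ}, IsCoSignotope n d τ → Supp n τ := fun h A hA => (h.1 A hA).1
  refine ⟨⟨?_, ?_, ?_⟩, ?_⟩
  · rintro σ ⟨h1, h2⟩
    exact ⟨cmap_sig n d hdn h1, (cmap_plusCount n (hS h1)).trans h2⟩
  · rintro σ ⟨h1, _⟩ σ' ⟨h1', _⟩ he
    rw [← cmap_cmap n (hS h1), ← cmap_cmap n (hS h1'), he]
  · rintro τ ⟨h1, h2⟩
    exact ⟨cmap n τ, ⟨cmap_cosig n d hdn h1, (cmap_plusCount n (hT h1)).trans h2⟩,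
      cmap_cmap n (hT h1)⟩
  · intro σ σ' h h'
    refine ⟨cmap_step n (hS h) (hS h'), fun hs => ?_⟩
    have := cmap_step n (cmap_supp n σ) (cmap_supp n σ') hs
    rwa [cmap_cmap n (hS h), cmap_cmap n (hS h')] at this
end
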